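/- A ring R is quasi-Frobenius if and only if R is right Johns and left CS. -/

import Mathlib

open MulOpposite in
/-- Right ideals of `R`, as submodules of `R` over `Rᵐᵒᵖ`. -/
abbrev RIdeal (R : Type*) [Ring R] := Submodule Rᵐᵒᵖ R

section Defs
variable (R : Type*) [Ring R]

/-- Left annihilator of a subset. -/
def lAnn (X : Set R) : Set R := {a | ∀ x ∈ X, a * x = 0}

/-- Right annihilator of a subset. -/
def rAnn (X : Set R) : Set R := {a | ∀ x ∈ X, x * a = 0}

/-- Right annihilator of a subset, as a right ideal. -/
def rAnnI (X : Set R) : RIdeal R where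
  carrier := rAnn R X
  add_mem' := by intro a b ha hb x hx; rw [mul_add, ha x hx, hb x hx, add_zero]
  zero_mem' := by intro x hx; rw [mul_zero]
  smul_mem' := by
    intro c a ha x hx
    show x * (a * c.unop) = 0
    rw [← mul_assoc, ha x hx, zero_mul]

/-- `R` is left P-injective: `rl(a) = aR` for every `a`. -/
def IsLeftPInjective : Prop :=
  ∀ a x : R, (∀ u : R, u * a = 0 → u * x = 0) ↔ ∃ s : R, x = a * s

/-- `R` is left 2-injective. -/
def IsLeft2Injective : Prop :=
  ∀ (a b : R) (f : ↥(Submodule.span R ({a, b} : Set R)) →ₗ[R] R),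
    ∃ g : R →ₗ[R] R, ∀ x : ↥(Submodule.span R ({a, b} : Set R)), g (x : R) = f x

/-- `R` is left FP-injective: every matrix ring over `R` is left P-injective. -/
def IsLeftFPInjective : Prop :=
  ∀ n : ℕ, IsLeftPInjective (Matrix (Fin n) (Fin n) R)

/-- A left ideal is small if `K + I = R` implies `K = R`. -/
def IsSmallLeftIdeal (I : Ideal R) : Prop := ∀ K : Ideal R, K ⊔ I = ⊤ → K = ⊤

/-- A complement left ideal: maximal with respect to intersecting some left ideal trivially. -/
def IsComplementLeftIdeal (C : Ideal R) : Prop :=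
  ∃ S : Ideal R, C ⊓ S = ⊥ ∧ ∀ C' : Ideal R, C ≤ C' → C' ⊓ S = ⊥ → C' = C

/-- A right ideal is essential in `R`. -/
def IsEssentialRIdeal (I : RIdeal R) : Prop := ∀ K : RIdeal R, K ⊓ I = ⊥ → K = ⊥

/-- The right socle: the sum of all simple (minimal) right ideals. -/
def rSocle : RIdeal R := sSup {m : RIdeal R | IsSimpleModule Rᵐᵒᵖ m}

/-- The right singular ideal. -/
def rSingular : Set R := {a | IsEssentialRIdeal R (rAnnI R {a})}

/-- ACC on right annihilators. -/
def ACCOnRightAnnihilators : Prop :=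
  ∀ f : ℕ → Set R, (∀ n, ∃ X : Set R, f n = rAnn R X) → (∀ n, f n ⊆ f (n + 1)) →
    ∃ n, ∀ m, n ≤ m → f m = f n

/-- The Jacobson radical, as a set. -/
def jacobsonSet : Set R := (TwoSidedIdeal.jacobson (⊥ : TwoSidedIdeal R) : Set R)

/-- A subset is nilpotent if products of some fixed length of its elements vanish. -/
def IsNilpotentSet (J : Set R) : Prop :=
  ∃ n : ℕ, ∀ f : Fin (n + 1) → R, (∀ i, f i ∈ J) → (List.ofFn f).prod = 0

/-- `R` is quasi-Frobenius: left noetherian and left self-injective. -/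
def IsQuasiFrobenius : Prop := IsNoetherianRing R ∧ Module.Injective R R

/-- `R` is right mininjective. -/
def IsRightMininjective : Prop :=
  ∀ (I : RIdeal R), IsSimpleModule Rᵐᵒᵖ I → ∀ f : I →ₗ[Rᵐᵒᵖ] R,
    ∃ c : R, ∀ x : I, f x = c * (x : R)

/-- `R` is left mininjective. -/
def IsLeftMininjective : Prop :=
  ∀ (I : Ideal R), IsSimpleModule R I → ∀ f : I →ₗ[R] R,
    ∃ c : R, ∀ x : I, f x = (x : R) * c

/-- `R` is right simple injective. -/
def IsRightSimpleInjective : Prop :=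
  ∀ (I : RIdeal R) (f : I →ₗ[Rᵐᵒᵖ] R), IsSimpleModule Rᵐᵒᵖ (LinearMap.range f) →
    ∃ c : R, ∀ x : I, f x = c * (x : R)

/-- `R` is left CS: every left ideal is essential in a direct summand of `R`. -/
def IsLeftCS : Prop :=
  ∀ I : Ideal R, ∃ K : Ideal R, (∃ K' : Ideal R, IsCompl K K') ∧ I ≤ K ∧
    ∀ L : Ideal R, L ≤ K → L ⊓ I = ⊥ → L = ⊥

/-- `R` is left min-CS: every minimal left ideal is essential in a direct summand. -/
def IsLeftMinCS : Prop :=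
  ∀ I : Ideal R, IsSimpleModule R I → ∃ K : Ideal R, (∃ K' : Ideal R, IsCompl K K') ∧ I ≤ K ∧
    ∀ L : Ideal R, L ≤ K → L ⊓ I = ⊥ → L = ⊥

/-- `R` is right Johns: right noetherian and every right ideal is a right annihilator. -/
def IsRightJohns : Prop :=
  IsNoetherianRing Rᵐᵒᵖ ∧ ∀ I : RIdeal R, ∃ X : Set R, (I : Set R) = rAnn R X

end Defs

section MoreDefs
variable (R : Type*) [Ring R]

/-- Left annihilator of a subset, as a left ideal. -/
def lAnnI (X : Set R) : Ideal R where
  carrier := lAnn R X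
  add_mem' := by intro a b ha hb x hx; rw [add_mul, ha x hx, hb x hx, add_zero]
  zero_mem' := by intro x hx; rw [zero_mul]
  smul_mem' := by
    intro c a ha x hx
    show c * a * x = 0
    rw [mul_assoc, ha x hx, mul_zero]

/-- A left ideal is essential in `R`. -/
def IsEssentialLIdeal (I : Ideal R) : Prop := ∀ K : Ideal R, K ⊓ I = ⊥ → K = ⊥

/-- The left singular ideal `Z_l`. -/
def lSingular : Set R := {a | IsEssentialLIdeal R (lAnnI R {a})}

end MoreDefs

open MulOpposite

section QF

/-- membership in the radical -/
theorem jac_iff {R : Type*} [Ring R] (x : R) :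
    x ∈ Ring.jacobson R ↔ ∀ y : R, ∃ z : R, z * (1 + y * x) = 1 := by
  rw [← Ideal.jacobson_bot, Ideal.mem_jacobson_iff]
  refine forall_congr' fun y => exists_congr fun z => ?_
  rw [Ideal.mem_bot, sub_eq_zero, mul_add, mul_one, mul_assoc, add_comm]

theorem jac_right {R : Type*} [Ring R] {x : R} (hx : x ∈ Ring.jacobson R) (y : R) :
    ∃ z : R, (1 + x * y) * z = 1 ∧ z * (1 + x * y) = 1 := by
  have hxy : x * y ∈ Ring.jacobson R := Ideal.mul_mem_right _ _ hx
  obtain ⟨z, hz⟩ := (jac_iff _).1 hxy 1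
  rw [one_mul] at hz
  have h2 : z - 1 ∈ Ring.jacobson R := by
    have : z - 1 = -(z * (x * y)) := by
      rw [mul_add, mul_one] at hz
      rw [← hz]; abel
    rw [this]
    exact neg_mem (Ideal.mul_mem_left _ _ hxy)
  obtain ⟨w, hw⟩ := (jac_iff _).1 h2 1
  rw [one_mul, add_sub_cancel] at hw
  have : w = 1 + x * y := by
    calc w = w * (z * (1 + x * y)) := by rw [hz, mul_one]
      _ = _ := by rw [← mul_assoc, hw, one_mul]
  exact ⟨z, by rw [← this]; exact hw, hz⟩

theorem jac_op_aux {R : Type*} [Ring R] {x : R} (hx : x ∈ Ring.jacobson R) :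
    op x ∈ Ring.jacobson Rᵐᵒᵖ := by
  rw [jac_iff]
  intro y
  obtain ⟨z, hz, -⟩ := jac_right hx y.unop
  refine ⟨op z, unop_injective ?_⟩
  simpa using hz

theorem jac_op {R : Type*} [Ring R] (x : R) :
    op x ∈ Ring.jacobson Rᵐᵒᵖ ↔ x ∈ Ring.jacobson R := by
  refine ⟨fun h => ?_, jac_op_aux⟩
  rw [jac_iff]
  intro y
  -- 1 + y x
  obtain ⟨z, hz, -⟩ := jac_right h (op y)
  refine ⟨unop z, op_injective ?_⟩
  simpa using hz

/-- `1 - z r` right invertible for all `r`. -/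
theorem mem_jac_of_right {R : Type*} [Ring R] (z : R)
    (h : ∀ r : R, ∃ s : R, (1 - z * r) * s = 1) : z ∈ Ring.jacobson R := by
  rw [← jac_op, jac_iff]
  intro y
  obtain ⟨s, hs⟩ := h (-y.unop)
  refine ⟨op s, unop_injective ?_⟩
  simpa using hs

theorem vnr_semisimple {S : Type*} [Ring S] [IsNoetherianRing S]
    (hv : ∀ a : S, ∃ x, a = a * x * a) : IsSemisimpleRing S := by
  refine (isSemisimpleModule_iff S S).2 ⟨fun (L : Ideal S) => ?_⟩
  obtain ⟨M, ⟨e, he, heL, rfl⟩, hmax⟩ := (set_has_maximal_iff_noetherian (R := S) (M := S)).2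
    inferInstance {M | ∃ e : S, e * e = e ∧ e ∈ L ∧ M = Ideal.span {e}}
    ⟨_, 0, by simp, zero_mem _, rfl⟩
  have key : ∀ x ∈ L, x * e = x := by
    intro x hx
    by_contra hne
    obtain ⟨g, hg⟩ := hv (x - x * e)
    set y := x - x * e with hy
    have hyL : y ∈ L := sub_mem hx (L.mul_mem_left _ heL)
    have hye : y * e = 0 := by rw [hy, sub_mul, mul_assoc, he, sub_self]
    set f := g * y with hf
    have hfe : f * e = 0 := by rw [hf, mul_assoc, hye, mul_zero]
    have hff : f * f = f := by
      rw [hf, mul_assoc, ← mul_assoc y, ← hg]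
    have hyf : y * f = y := by rw [hf, ← mul_assoc, ← hg]
    clear_value f
    have hee' : e * (e + f - e * f) = e := by
      rw [mul_sub, mul_add, ← mul_assoc, he]; simp
    have hfe' : f * (e + f - e * f) = f := by
      rw [mul_sub, mul_add, ← mul_assoc, hfe, hff]; simp
    refine hmax (Ideal.span {e + f - e * f}) ⟨e + f - e * f, ?_, ?_, rfl⟩ ?_
    · calc (e + f - e * f) * (e + f - e * f) =
          e * (e + f - e * f) + f * (e + f - e * f) - e * (f * (e + f - e * f)) := by
            rw [sub_mul, add_mul, mul_assoc e f]
        _ = _ := by rw [hee', hfe']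
    · have hfL : f ∈ L := by rw [hf]; exact L.mul_mem_left _ hyL
      exact sub_mem (add_mem heL hfL) (L.mul_mem_left _ hfL)
    · refine lt_of_le_of_ne ?_ ?_
      · rw [Ideal.span_le, Set.singleton_subset_iff]
        exact Ideal.mem_span_singleton'.2 ⟨e, hee'⟩
      · intro heq
        have h1 : y ∈ Ideal.span {e} := by
          rw [heq]
          refine Ideal.mem_span_singleton'.2 ⟨y * f, ?_⟩
          rw [mul_assoc, hfe', hyf]
        obtain ⟨a, ha⟩ := Ideal.mem_span_singleton'.1 h1
        have : y = 0 := by rw [← hye, ← ha, mul_assoc, he]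
        exact hne (sub_eq_zero.1 this).symm
  refine ⟨Ideal.span {1 - e}, ?_, ?_⟩
  · rw [disjoint_iff, eq_bot_iff]
    rintro x ⟨hx1, hx2⟩
    obtain ⟨a, rfl⟩ := Ideal.mem_span_singleton'.1 hx2
    have := key _ hx1
    rw [mul_assoc, sub_mul, he, one_mul, sub_self, mul_zero] at this
    rw [← this]; exact zero_mem _
  · rw [codisjoint_iff, eq_top_iff]
    intro x _
    rw [show x = x * e + x * (1 - e) by rw [mul_sub]; simp]
    exact Submodule.add_mem_sup (L.mul_mem_left _ heL)
      (Ideal.mul_mem_left _ _ (Ideal.mem_span_singleton_self _))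

theorem vnr_quot {R : Type*} [Ring R]
    (hv : ∀ a : R, ∃ x, a - a * x * a ∈ Ring.jacobson R) (a : R ⧸ Ring.jacobson R) :
    ∃ x, a = a * x * a := by
  obtain ⟨a, rfl⟩ := Ideal.Quotient.mk_surjective a
  obtain ⟨x, hx⟩ := hv a
  refine ⟨Ideal.Quotient.mk _ x, ?_⟩
  rw [← map_mul, ← map_mul]
  exact Ideal.Quotient.eq.2 hx

theorem artin_of {R : Type*} [Ring R] [IsNoetherianRing R]
    (hv : ∀ a : R, ∃ x, a - a * x * a ∈ Ring.jacobson R)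
    (hn : IsNilpotent (Ring.jacobson R)) : IsArtinianRing R := by
  have : IsNoetherianRing (R ⧸ Ring.jacobson R) :=
    isNoetherianRing_of_surjective R _ (Ideal.Quotient.mk _) Ideal.Quotient.mk_surjective
  have : IsSemisimpleRing (R ⧸ Ring.jacobson R) := vnr_semisimple (vnr_quot hv)
  have : IsSemiprimaryRing R := ⟨this, hn⟩
  exact IsSemiprimaryRing.isNoetherian_iff_isArtinian.mp ‹_›

theorem vnr_op {R : Type*} [Ring R]
    (hv : ∀ a : R, ∃ x, a - a * x * a ∈ Ring.jacobson R) (a : Rᵐᵒᵖ) :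
    ∃ x, a - a * x * a ∈ Ring.jacobson Rᵐᵒᵖ := by
  obtain ⟨x, hx⟩ := hv a.unop
  refine ⟨op x, ?_⟩
  have := (jac_op _).2 hx
  simpa [mul_assoc] using this

theorem ssid {R : Type*} [Ring R] [IsNoetherianRing Rᵐᵒᵖ]
    (hv : ∀ a : R, ∃ x, a - a * x * a ∈ Ring.jacobson R) (I : Ideal R) : ∃ c ∈ I, ∀ i ∈ I, i - i * c ∈ Ring.jacobson R := by
  have : IsNoetherianRing (R ⧸ Ring.jacobson R)ᵐᵒᵖ :=
    isNoetherianRing_of_surjective Rᵐᵒᵖ _ (RingHom.op (Ideal.Quotient.mk (Ring.jacobson R)))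
      (fun y => by
        obtain ⟨x, hx⟩ := Ideal.Quotient.mk_surjective y.unop
        exact ⟨op x, unop_injective hx⟩)
  have h1 : IsSemisimpleRing (R ⧸ Ring.jacobson R)ᵐᵒᵖ := vnr_semisimple (fun a => by
    obtain ⟨x, hx⟩ := vnr_quot hv a.unop
    exact ⟨op x, unop_injective (by simpa [mul_assoc] using hx)⟩)
  have := isSemisimpleRing_mulOpposite_iff.1 h1
  obtain ⟨e, he, hIe⟩ := IsSemisimpleRing.ideal_eq_span_idempotent
    (I.map (Ideal.Quotient.mk (Ring.jacobson R)))
  have hmem : e ∈ I.map (Ideal.Quotient.mk (Ring.jacobson R)) := by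
    rw [hIe]; exact Ideal.mem_span_singleton_self _
  obtain ⟨c, hc, rfl⟩ := (Ideal.mem_map_iff_of_surjective _ Ideal.Quotient.mk_surjective).1 hmem
  refine ⟨c, hc, fun i hi => ?_⟩
  have h2 := Ideal.mem_map_of_mem (Ideal.Quotient.mk (Ring.jacobson R)) hi
  rw [hIe] at h2
  obtain ⟨a, ha⟩ := Ideal.mem_span_singleton'.1 h2
  refine Ideal.Quotient.eq.1 ?_
  rw [map_mul, ← ha, mul_assoc, he]

/-- nilpotency of the radical, on the other side -/
theorem johns_nilp {A : Type*} [Ring A] [IsNoetherianRing A]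
    (h : ∀ (L : Ideal A) (x : A), (∀ u, (∀ y ∈ L, y * u = 0) → x * u = 0) → x ∈ L) :
    IsNilpotent (Ring.jacobson A) := by
  set J := Ring.jacobson A with hJ
  have hanti : ∀ n, J ^ (n + 2) ≤ J ^ (n + 1) := by
    intro n
    rw [show n + 2 = (n + 1) + 1 from rfl, Submodule.pow_succ' _ (Nat.succ_ne_zero n)]
    exact Submodule.mul_le.2 fun m _ k hk => Ideal.mul_mem_left _ m hk
  let r : ℕ → Ideal A := fun n =>
    { carrier := {u | ∀ y ∈ J ^ (n + 1), y * u = 0}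
      add_mem' := fun {a b} ha hb y hy => by rw [mul_add, ha y hy, hb y hy, add_zero]
      zero_mem' := fun y _ => mul_zero y
      smul_mem' := fun c u hu y hy => by
        have : y * c ∈ J ^ (n + 1) := by
          clear hu
          rw [Submodule.pow_succ] at hy ⊢
          induction hy using Submodule.mul_induction_on' with
          | mem_mul_mem m hm k hk =>
            rw [mul_assoc]
            exact Ideal.mul_mem_mul hm (Ideal.mul_mem_right _ _ hk)
          | add x _ y _ hx hy => rw [add_mul]; exact add_mem hx hy
        show y * (c * u) = 0
        rw [← mul_assoc]
        exact hu _ this }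
  obtain ⟨n, hn⟩ := monotone_stabilizes_iff_noetherian.2 (inferInstanceAs (IsNoetherian A A))
    ⟨r, monotone_nat_of_le_succ fun n u hu y hy => hu y (hanti n hy)⟩
  have h1 : J ^ (n + 1) ≤ J ^ (n + 2) := by
    intro x hx
    refine h _ x fun u hu => ?_
    have : u ∈ r n := by
      have := hn (n + 1) (Nat.le_succ n)
      change r n = r (n + 1) at this
      rw [this]
      exact hu
    exact this x hx
  refine ⟨n + 1, ?_⟩
  refine Submodule.FG.eq_bot_of_le_jacobson_smul (IsNoetherian.noetherian _) ?_
  rw [show n + 2 = (n + 1) + 1 from rfl, Submodule.pow_succ' _ (Nat.succ_ne_zero n)] at h1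
  exact h1
def ZEl {R : Type*} [Ring R] (w : R) : Prop := ∀ y : R, y ≠ 0 → ∃ u, u * y ≠ 0 ∧ u * y * w = 0

def PInj (R : Type*) [Ring R] : Prop :=
  ∀ a x : R, (∀ u : R, u * a = 0 → u * x = 0) → ∃ s : R, x = a * s

theorem cs_el {R : Type*} [Ring R] (hcs : IsLeftCS R) (I : Ideal R) :
    ∃ e : R, e * e = e ∧ (∀ x ∈ I, x * e = x) ∧
      ∀ x, x ≠ 0 → x * e = x → ∃ u, u * x ∈ I ∧ u * x ≠ 0 := by
  obtain ⟨K, ⟨K', hK⟩, hIK, hess⟩ := hcs I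
  have h1 : (1 : R) ∈ K ⊔ K' := by rw [hK.sup_eq_top]; trivial
  obtain ⟨e, he, f, hf, hef⟩ := Submodule.mem_sup.1 h1
  have key : ∀ k ∈ K, k * e = k := by
    intro k hk
    have h2 : k - k * e ∈ K ⊓ K' := by
      refine ⟨sub_mem hk (K.mul_mem_left _ he), ?_⟩
      have : k - k * e = k * f := by rw [eq_sub_of_add_eq' hef]; rw [mul_sub, mul_one]
      rw [this]; exact K'.mul_mem_left _ hf
    rw [hK.inf_eq_bot] at h2
    exact (sub_eq_zero.1 h2).symm
  refine ⟨e, key e he, fun x hx => key x (hIK hx), fun x hx0 hxe => ?_⟩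
  by_contra hcon
  push Not at hcon
  have hxK : x ∈ K := by rw [← hxe]; exact K.mul_mem_left _ he
  have := hess (Ideal.span {x}) (by rwa [Ideal.span_le, Set.singleton_subset_iff]) (by
    rw [eq_bot_iff]
    rintro y ⟨hy1, hy2⟩
    obtain ⟨u, rfl⟩ := Ideal.mem_span_singleton'.1 hy1
    exact hcon u hy2)
  exact hx0 (Ideal.span_singleton_eq_bot.1 this)

theorem cs_vnr {R : Type*} [Ring R] (hcs : IsLeftCS R) (hp : PInj R) (a : R) :
    ∃ x, ZEl (a - a * x * a) := by
  obtain ⟨e, he, h1, h2⟩ := cs_el hcs (lAnnI R {a})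
  have hl : ∀ u, u ∈ lAnnI R {a} ↔ u * a = 0 := fun u =>
    ⟨fun h => h a rfl, fun h x hx => by rw [Set.mem_singleton_iff.1 hx]; exact h⟩
  obtain ⟨s, hs⟩ := hp ((1 - e) * a) (1 - e) (fun u hu => by
    have := h1 (u * (1 - e)) ((hl _).2 (by rw [mul_assoc]; exact hu))
    rw [← this, mul_assoc, sub_mul, he, one_mul, sub_self, mul_zero])
  have hw : (1 - e) * (a - a * (s * (1 - e)) * a) = 0 := by
    have : (1 - e) * (a - a * (s * (1 - e)) * a)
        = (1 - e) * a - ((1 - e) * a * s) * (1 - e) * a := by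
      rw [mul_sub]; simp only [mul_assoc]
    rw [this, ← hs]
    have h3 : (1 - e) * (1 - e) = 1 - e := by
      rw [mul_sub, mul_one, sub_mul, he, one_mul]; simp
    rw [h3, sub_self]
  refine ⟨s * (1 - e), fun y hy => ?_⟩
  by_cases hye : y * e = 0
  · refine ⟨1, by rwa [one_mul], ?_⟩
    have : y = y * (1 - e) := by rw [mul_sub, hye]; simp
    rw [one_mul, this, mul_assoc, hw, mul_zero]
  · obtain ⟨u, hu1, hu2⟩ := h2 (y * e) hye (by rw [mul_assoc, he])
    refine ⟨u, fun h => hu2 (by rw [← mul_assoc, h, zero_mul]), ?_⟩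
    have h4 : u * (y * e) * (a - a * (s * (1 - e)) * a) = 0 := by
      have h5 := (hl _).1 hu1
      rw [mul_sub, h5, mul_assoc a, ← mul_assoc _ a, h5]; simp
    have : u * y = u * (y * e) + u * y * (1 - e) := by
      rw [mul_sub, ← mul_assoc]; simp
    rw [this, add_mul, h4, mul_assoc _ (1 - e), hw]; simp

theorem zel_jac {R : Type*} [Ring R] (hp : PInj R) (z : R) (hz : ZEl z) :
    z ∈ Ring.jacobson R := by
  refine mem_jac_of_right z fun r => ?_
  obtain ⟨s, hs⟩ := hp (1 - z * r) 1 (fun v hv => by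
    by_contra hne
    rw [mul_one] at hne
    obtain ⟨u, hu1, hu2⟩ := hz v hne
    apply hu1
    rw [mul_sub, mul_one, sub_eq_zero] at hv
    rw [hv, ← mul_assoc, ← mul_assoc, hu2, zero_mul])
  exact ⟨s, hs.symm⟩

theorem johns_el {R : Type*} [Ring R] (h : IsRightJohns R) (T : RIdeal R) (x : R)
    (hx : ∀ u, (∀ t ∈ T, u * t = 0) → u * x = 0) : x ∈ T := by
  obtain ⟨X, hX⟩ := h.2 T
  have : x ∈ (T : Set R) := by
    rw [hX]
    intro y hy
    refine hx y fun t ht => ?_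
    have ht' : t ∈ (T : Set R) := ht
    rw [hX] at ht'
    exact ht' y hy
  exact this

theorem johns_pinj {R : Type*} [Ring R] (h : IsRightJohns R) : PInj R := by
  intro a x hx
  have := johns_el h (Submodule.span Rᵐᵒᵖ {a}) x (fun u hu =>
    hx u (hu a (Submodule.mem_span_singleton_self a)))
  obtain ⟨s, hs⟩ := Submodule.mem_span_singleton.1 this
  exact ⟨s.unop, hs.symm⟩

def toOp (R : Type*) [Ring R] : R ≃ₗ[Rᵐᵒᵖ] Rᵐᵒᵖ where
  toFun := op
  invFun := unop
  map_add' _ _ := rfl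
  map_smul' _ _ := rfl
  left_inv _ := rfl
  right_inv _ := rfl

/-- right ideal of R from left ideal of the opposite -/
theorem johns_op {R : Type*} [Ring R] (h : IsRightJohns R) (L : Ideal Rᵐᵒᵖ) (x : Rᵐᵒᵖ)
    (hx : ∀ u, (∀ y ∈ L, y * u = 0) → x * u = 0) : x ∈ L := by
  have := johns_el h (Submodule.comap (toOp R).toLinearMap L) x.unop (fun u hu => by
    refine op_injective (hx (op u) fun y hy => unop_injective (hu y.unop hy)))
  exact this

theorem nil_el {R : Type*} [Ring R] (hn : IsNilpotent (Ring.jacobson Rᵐᵒᵖ)) (k : R) (hk : k ≠ 0) :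
    ∃ s, s * k ≠ 0 ∧ ∀ j ∈ Ring.jacobson R, j * (s * k) = 0 := by
  classical
  obtain ⟨n, hn⟩ := hn
  set J := Ring.jacobson Rᵐᵒᵖ
  have hex : ∃ n, ∀ s ∈ J ^ n, op k * s = 0 := ⟨n, fun s hs => by
    rw [hn] at hs
    rw [(Submodule.mem_bot _).1 hs, mul_zero]⟩
  have hsp := Nat.find_spec hex
  rcases hm : Nat.find hex with _ | m
  · rw [hm] at hsp
    exfalso
    have := hsp 1 (by rw [Submodule.pow_zero]; simp)
    rw [mul_one] at this
    exact hk (op_injective this)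
  · rw [hm] at hsp
    have := Nat.find_min hex (m := m) (by omega)
    push Not at this
    obtain ⟨s, hs, hks⟩ := this
    refine ⟨s.unop, fun h => hks (unop_injective h), fun j hj => ?_⟩
    have h1 := hsp (s * op j) (by
      rw [Submodule.pow_succ]
      exact Ideal.mul_mem_mul hs ((jac_op j).2 hj))
    rw [← mul_assoc] at h1
    exact op_injective h1
/-- The data available for a right Johns, left CS ring. -/
structure Good (R : Type*) [Ring R] : Prop where
  hj : ∀ (T : RIdeal R) (x : R), (∀ u, (∀ t ∈ T, u * t = 0) → u * x = 0) → x ∈ T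
  hp : PInj R
  cs : IsLeftCS R
  nil : ∀ k : R, k ≠ 0 → ∃ s, s * k ≠ 0 ∧ ∀ j ∈ Ring.jacobson R, j * (s * k) = 0
  ss : ∀ I : Ideal R, ∃ c ∈ I, ∀ i ∈ I, i - i * c ∈ Ring.jacobson R
  noe : IsNoetherian Rᵐᵒᵖ R
  art : IsArtinian Rᵐᵒᵖ R

theorem good_of {R : Type*} [Ring R] (h : IsRightJohns R) (hcs : IsLeftCS R) : Good R := by
  have hp := johns_pinj h
  have hv : ∀ a : R, ∃ x, a - a * x * a ∈ Ring.jacobson R := fun a => by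
    obtain ⟨x, hx⟩ := cs_vnr hcs hp a
    exact ⟨x, zel_jac hp _ hx⟩
  have := h.1
  have hn : IsNilpotent (Ring.jacobson Rᵐᵒᵖ) := johns_nilp (johns_op h)
  have hart : IsArtinianRing Rᵐᵒᵖ := artin_of (vnr_op hv) hn
  exact ⟨johns_el h, hp, hcs, nil_el hn, ssid hv,
    (toOp R).isNoetherian_iff.2 this, (toOp R).isArtinian_iff.2 hart⟩

theorem rsmul_eq {R : Type*} [Ring R] (c : Rᵐᵒᵖ) (x : R) : c • x = x * c.unop := rfl

theorem rmul_mem {R : Type*} [Ring R] (T : RIdeal R) {x : R} (hx : x ∈ T) (r : R) : x * r ∈ T :=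
  T.smul_mem (op r) hx

/-- auxiliary right ideal -/
def WW {R : Type*} [Ring R] (I : RIdeal R) (hI : ∀ r : R, ∀ x ∈ I, r * x ∈ I) : RIdeal R where
  carrier := {s | (∀ j ∈ Ring.jacobson R, j * s = 0) ∧ ∀ i ∈ I, s * i = 0}
  add_mem' := fun {a b} ha hb => ⟨fun j hj => by rw [mul_add, ha.1 j hj, hb.1 j hj, add_zero],
    fun i hi => by rw [add_mul, ha.2 i hi, hb.2 i hi, add_zero]⟩
  zero_mem' := ⟨fun j _ => mul_zero j, fun i _ => zero_mul i⟩
  smul_mem' := fun c a ha => by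
    refine ⟨fun j hj => ?_, fun i hi => ?_⟩
    · rw [rsmul_eq, ← mul_assoc, ha.1 j hj, zero_mul]
    · rw [rsmul_eq, mul_assoc]; exact ha.2 _ (hI _ _ hi)

def PP {R : Type*} [Ring R] (I : RIdeal R) (hI : ∀ r : R, ∀ x ∈ I, r * x ∈ I) : RIdeal R where
  carrier := {x | ∀ s ∈ WW I hI, x * s = 0}
  add_mem' := fun {a b} ha hb s hs => by rw [add_mul, ha s hs, hb s hs, add_zero]
  zero_mem' := fun s _ => zero_mul s
  smul_mem' := fun c a ha s hs => by
    rw [rsmul_eq, mul_assoc]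
    refine ha _ ⟨fun j hj => ?_, fun i hi => ?_⟩
    · rw [← mul_assoc]; exact hs.1 _ (Ideal.mul_mem_right _ _ hj)
    · rw [mul_assoc, hs.2 i hi, mul_zero]

theorem PP_left {R : Type*} [Ring R] (I : RIdeal R) (hI : ∀ r : R, ∀ x ∈ I, r * x ∈ I) :
    ∀ r : R, ∀ x ∈ PP I hI, r * x ∈ PP I hI := fun r x hx s hs => by
  rw [mul_assoc, hx s hs, mul_zero]

theorem Good.kasch0 {R : Type*} [Ring R] (g : Good R) (x : R)
    (hx : ∀ s, (∀ j ∈ Ring.jacobson R, j * s = 0) → x * s = 0) : x ∈ Ring.jacobson R := by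
  by_contra hxJ
  have := g.noe
  let J : RIdeal R :=
    { carrier := Ring.jacobson R
      add_mem' := fun {a b} ha hb => (Ring.jacobson R).add_mem ha hb
      zero_mem' := (Ring.jacobson R).zero_mem
      smul_mem' := fun c a ha => Ideal.mul_mem_right _ _ ha }
  obtain ⟨I, ⟨hI, hJI, hIP, y, hyP, hyI⟩, hmax⟩ :=
    (set_has_maximal_iff_noetherian (R := Rᵐᵒᵖ) (M := R)).2 inferInstance
    {I : RIdeal R | ∃ hI : ∀ r : R, ∀ x ∈ I, r * x ∈ I, (∀ j ∈ Ring.jacobson R, j ∈ I) ∧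
      I ≤ PP I hI ∧ ∃ y ∈ PP I hI, y ∉ I}
    ⟨J, fun r x hx => Ideal.mul_mem_left _ _ hx, fun j hj => hj,
      fun j hj s hs => hs.1 j hj, x, fun s hs => hx s hs.1, hxJ⟩
  have hI' := PP_left I hI
  refine hmax (PP I hI) ⟨hI', fun j hj s hs => hs.1 j hj, ?_, ?_⟩ ?_
  · intro x hx s hs
    exact hx s ⟨hs.1, fun i hi => hs.2 i (hIP hi)⟩
  · by_contra hcon
    push Not at hcon
    have hW : WW I hI ≤ WW (PP I hI) hI' := by
      intro w hw
      refine g.hj _ w fun u hu => ?_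
      exact hcon u hu w hw
    apply hyI
    refine g.hj I y fun u hu => ?_
    by_contra hk
    obtain ⟨c, hc, hcc⟩ := g.ss
      { carrier := PP I hI
        add_mem' := fun {a b} ha hb => (PP I hI).add_mem ha hb
        zero_mem' := (PP I hI).zero_mem
        smul_mem' := fun c a ha => hI' c a ha }
    obtain ⟨s, hs, hsJ⟩ := g.nil _ hk
    have hsW : s * (u * y) ∈ WW I hI := ⟨hsJ, fun i hi => by
      rw [mul_assoc, mul_assoc, hu _ (hI _ _ hi), mul_zero]⟩
    have h1 := (hW hsW).2 c hc
    have h2 := hu _ (hJI _ (hcc y hyP))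
    rw [mul_sub, sub_eq_zero] at h2
    apply hs
    rw [h2, ← h1]
    simp only [mul_assoc]
  · exact lt_of_le_of_ne hIP fun h => hyI (by rw [h]; exact hyP)

theorem Good.kasch {R : Type*} [Ring R] (g : Good R) (n : Ideal R) (hn : n ≠ ⊤) :
    ∃ w : R, w ≠ 0 ∧ ∀ x ∈ n, x * w = 0 := by
  obtain ⟨m, hm, hnm⟩ := Ideal.exists_le_maximal n hn
  obtain ⟨c, hc, hcc⟩ := g.ss m
  have h1 : (1 - c) ∉ Ring.jacobson R := by
    intro h
    apply hm.ne_top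
    rw [Ideal.eq_top_iff_one, show (1 : R) = (1 - c) + c by simp]
    exact add_mem (Ring.jacobson_le_of_isMaximal m h) hc
  have h2 := mt (g.kasch0 (1 - c)) h1
  push Not at h2
  obtain ⟨s, hs, hcs⟩ := h2
  refine ⟨_, hcs, fun x hx => ?_⟩
  rw [← mul_assoc, mul_sub, mul_one]
  exact hs _ (hcc x (hnm hx))

theorem Good.propA {R : Type*} [Ring R] (g : Good R) (y y' : R) 
    (hy : ∀ u, y * u ≠ 0 → ∃ v, y * u * v = y) (hyy : ∀ u, y * u = 0 → y' * u = 0) :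
    ∃ r, y' = r * y := by
  by_cases h0 : y' = 0
  · exact ⟨0, by rw [h0, zero_mul]⟩
  obtain ⟨e, he, h1, h2⟩ := cs_el g.cs (Ideal.span {y})
  have hye := h1 y (Ideal.mem_span_singleton_self y)
  have hye' : y' * e = y' := by
    have := hyy (1 - e) (by rw [mul_sub, hye]; simp)
    rw [mul_sub, mul_one, sub_eq_zero] at this
    exact this.symm
  obtain ⟨u, hu, hu0⟩ := h2 y' h0 hye'
  obtain ⟨v, hv⟩ := Ideal.mem_span_singleton'.1 hu
  have hl : ∀ u, u ∈ lAnnI R {y'} ↔ u * y' = 0 := fun u =>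
    ⟨fun h => h y' rfl, fun h x hx => by rw [Set.mem_singleton_iff.1 hx]; exact h⟩
  obtain ⟨m, hm, hnm⟩ := Ideal.exists_le_maximal (lAnnI R {y'}) (fun h => by
    have := (hl 1).1 (by rw [h]; trivial)
    rw [one_mul] at this; exact h0 this)
  obtain ⟨w, hw0, hw⟩ := g.kasch m hm.ne_top
  obtain ⟨t, ht⟩ := g.hp y' w (fun u hu => hw u (hnm ((hl u).2 hu)))
  obtain ⟨z, hz⟩ := hy t (fun h => hw0 (by rw [ht, hyy t h]))
  have hwz : w * z = y' := by
    have := hyy (t * z - 1) (by rw [mul_sub, ← mul_assoc, hz, mul_one, sub_self])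
    rw [mul_sub, mul_one, sub_eq_zero, ← mul_assoc, ← ht] at this
    exact this
  have hmy : ∀ x ∈ m, x * y' = 0 := fun x hx => by rw [← hwz, ← mul_assoc, hw x hx, zero_mul]
  have hum : u ∉ m := fun h => hu0 (hmy u h)
  have h1m : (1 : R) ∈ m ⊔ Ideal.span {u} := by
    have : m ⊔ Ideal.span {u} = ⊤ := hm.out.2 _ (by
      refine lt_of_le_of_ne le_sup_left fun h => hum ?_
      rw [h]; exact Ideal.mem_sup_right (Ideal.mem_span_singleton_self u))
    rw [this]; trivial
  obtain ⟨p, hp, q, hq, hpq⟩ := Submodule.mem_sup.1 h1m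
  obtain ⟨a, rfl⟩ := Ideal.mem_span_singleton'.1 hq
  refine ⟨a * v, ?_⟩
  calc y' = (p + a * u) * y' := by rw [hpq, one_mul]
    _ = _ := by rw [add_mul, hmy p hp, zero_add, mul_assoc, ← hv, mul_assoc]

/-- `T ∩ r(b)` -/
def TT {R : Type*} [Ring R] (T : RIdeal R) (b : R) : RIdeal R where
  carrier := {t | t ∈ T ∧ b * t = 0}
  add_mem' := fun {x y} hx hy => ⟨T.add_mem hx.1 hy.1, by rw [mul_add, hx.2, hy.2, add_zero]⟩
  zero_mem' := ⟨T.zero_mem, mul_zero b⟩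
  smul_mem' := fun c x hx => ⟨T.smul_mem c hx.1, by
    rw [rsmul_eq, ← mul_assoc, hx.2, zero_mul]⟩

theorem Good.lr {R : Type*} [Ring R] (g : Good R) (L : Ideal R) (x : R)
    (hx : ∀ t, (∀ l ∈ L, l * t = 0) → x * t = 0) : x ∈ L := by
  have := g.noe
  have := g.art
  obtain ⟨T, hT, hmin⟩ := IsArtinian.set_has_minimal (R := Rᵐᵒᵖ) (M := R)
    {T : RIdeal R | ∀ u, (∀ t ∈ T, u * t = 0) → u ∈ L} ⟨⊤, fun u hu => by
      have := hu 1 trivial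
      rw [mul_one] at this
      rw [this]; exact zero_mem _⟩
  refine hT x fun t ht => hx t ?_
  by_contra hcon
  push Not at hcon
  obtain ⟨b0, hb0, hbt0⟩ := hcon
  obtain ⟨T1, ⟨b, hb, ⟨t, ht, hbt⟩, rfl⟩, hmax⟩ :=
    (set_has_maximal_iff_noetherian (R := Rᵐᵒᵖ) (M := R)).2 inferInstance
    {T1 : RIdeal R | ∃ b ∈ L, (∃ t ∈ T, b * t ≠ 0) ∧ T1 = TT T b} ⟨_, b0, hb0, ⟨_, ht, hbt0⟩, rfl⟩
  have key : ∀ t ∈ T, ∀ t' ∈ T, b * t ≠ 0 → ∃ v, b * t' = b * t * v := by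
    intro t ht t' ht' hbt
    refine g.hp _ _ fun s hs => ?_
    by_contra hne
    refine hmax (TT T (s * b)) ⟨s * b, L.mul_mem_left _ hb, ⟨t', ht', by rwa [mul_assoc]⟩, rfl⟩ ?_
    refine lt_of_le_of_ne (fun z hz => ⟨hz.1, by rw [mul_assoc, hz.2, mul_zero]⟩) fun h => hbt ?_
    have : t ∈ TT T b := by rw [h]; exact ⟨ht, by rw [mul_assoc]; exact hs⟩
    exact this.2
  have hlt : TT T b < T := lt_of_le_of_ne (fun z hz => hz.1) fun h => hbt (by
    have : t ∈ TT T b := by rw [h]; exact ht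
    exact this.2)
  have hnot : ¬ ∀ u, (∀ t ∈ TT T b, u * t = 0) → u ∈ L := fun h => hmin _ h hlt
  push Not at hnot
  obtain ⟨c, hc, hcL⟩ := hnot
  obtain ⟨r, hr⟩ := g.propA (b * t) (c * t) (fun u hu => by
      obtain ⟨v, hv⟩ := key (t * u) (rmul_mem T ht u) t ht (by rwa [← mul_assoc])
      exact ⟨v, by rw [mul_assoc b t u]; exact hv.symm⟩) (fun u hu => by
      rw [mul_assoc] at hu ⊢
      exact hc _ ⟨rmul_mem T ht u, hu⟩)
  apply hcL
  have h1 : c - r * b ∈ L := hT _ fun t' ht' => by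
    obtain ⟨v, hv⟩ := key t ht t' ht' hbt
    have h2 := hc (t' - t * v) ⟨T.sub_mem ht' (rmul_mem T ht v), by
      rw [mul_sub, hv, mul_assoc, sub_self]⟩
    rw [mul_sub, sub_eq_zero, ← mul_assoc, hr] at h2
    rw [sub_mul, h2, mul_assoc r b t', hv]
    simp only [mul_assoc, sub_self]
  have := L.add_mem h1 (L.mul_mem_left r hb)
  rwa [sub_add_cancel] at this

theorem Good.qf {R : Type*} [Ring R] (g : Good R) : IsQuasiFrobenius R := by
  have := g.art
  have hnoe : IsNoetherianRing R := by
    refine set_has_maximal_iff_noetherian.1 fun S hS => ?_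
    obtain ⟨T, ⟨L, hL, rfl⟩, hmin⟩ := IsArtinian.set_has_minimal (R := Rᵐᵒᵖ) (M := R)
      ((fun L : Ideal R => rAnnI R (L : Set R)) '' S) (hS.image _)
    refine ⟨L, hL, fun I hI hlt => hmin _ ⟨I, hI, rfl⟩ ?_⟩
    refine lt_of_le_of_ne (fun z hz l hl => hz l (hlt.le hl)) fun h => hlt.not_ge fun x hx => ?_
    refine g.lr L x fun t ht => ?_
    have : t ∈ rAnnI R (L : Set R) := ht
    have h' : rAnnI R (I : Set R) = rAnnI R (L : Set R) := h
    rw [← h'] at this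
    exact this x hx
  refine ⟨hnoe, Module.Baer.injective ?_⟩
  have main : ∀ I : Ideal R, ∀ f : I →ₗ[R] R, ∃ c : R, ∀ x (hx : x ∈ I), f ⟨x, hx⟩ = x * c := by
    intro I
    refine Submodule.fg_induction
      (motive := fun (I : Ideal R) _ => ∀ f : I →ₗ[R] R, ∃ c : R, ∀ x (hx : x ∈ I),
        f ⟨x, hx⟩ = x * c) ?_ ?_ I (IsNoetherian.noetherian I)
    · intro a f
      have hmul : ∀ (u : R) (h : u * a ∈ Submodule.span R {a}), f ⟨u * a, h⟩ =
          u * f ⟨a, Submodule.mem_span_singleton_self a⟩ := fun u h => by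
        exact f.map_smul u ⟨a, Submodule.mem_span_singleton_self a⟩
      obtain ⟨s, hs⟩ := g.hp a (f ⟨a, Submodule.mem_span_singleton_self a⟩) (fun u hu => by
        rw [← hmul u (by rw [hu]; exact zero_mem _)]
        have : (⟨u * a, by rw [hu]; exact zero_mem _⟩ : Submodule.span R {a}) = 0 :=
          Subtype.ext hu
        rw [this, map_zero])
      refine ⟨s, fun x hx => ?_⟩
      obtain ⟨u, rfl⟩ := Submodule.mem_span_singleton.1 hx
      exact (hmul u hx).trans (by rw [hs, smul_eq_mul, mul_assoc])
    · intro A B _ _ hA hB f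
      obtain ⟨c1, h1⟩ := hA (f.comp (Submodule.inclusion le_sup_left))
      obtain ⟨c2, h2⟩ := hB (f.comp (Submodule.inclusion le_sup_right))
      have hd : c1 - c2 ∈ rAnnI R (A : Set R) ⊔ rAnnI R (B : Set R) := by
        refine g.hj _ _ fun u hu => ?_
        have hA' : u ∈ A := g.lr A u fun t ht => hu t (Submodule.mem_sup_left ht)
        have hB' : u ∈ B := g.lr B u fun t ht => hu t (Submodule.mem_sup_right ht)
        rw [mul_sub, ← h1 u hA', ← h2 u hB']
        exact sub_self _
      obtain ⟨p, hp, q, hq, hpq⟩ := Submodule.mem_sup.1 hd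
      refine ⟨c1 - p, fun x hx => ?_⟩
      obtain ⟨a, ha, b, hb, rfl⟩ := Submodule.mem_sup.1 hx
      have hfa : f ⟨a, Submodule.mem_sup_left ha⟩ = a * c1 := h1 a ha
      have hfb : f ⟨b, Submodule.mem_sup_right hb⟩ = b * c2 := h2 b hb
      have : (⟨a + b, hx⟩ : ↥(A ⊔ B)) =
        ⟨a, Submodule.mem_sup_left ha⟩ + ⟨b, Submodule.mem_sup_right hb⟩ := rfl
      rw [this, map_add, hfa, hfb, add_mul]
      have e1 : a * (c1 - p) = a * c1 := by rw [mul_sub, hp a ha, sub_zero]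
      have e2 : b * (c1 - p) = b * c2 := by
        have : c1 - p = c2 + q := by
          rw [sub_eq_iff_eq_add, add_assoc, add_comm q p, hpq]; abel
        rw [this, mul_add, hq b hb, add_zero]
      rw [e1, e2]
  intro I f
  obtain ⟨c, hc⟩ := main I f
  exact ⟨LinearMap.toSpanSingleton R R c, fun x hx => by
    rw [hc x hx]; rfl⟩
theorem inj_fg {R : Type*} [Ring R] (h : Module.Injective R R) (T : RIdeal R) (hT : T.FG) (x : R)
    (hx : ∀ u, (∀ t ∈ T, u * t = 0) → u * x = 0) : x ∈ T := by
  classical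
  obtain ⟨s, rfl⟩ := hT
  let φ : R →ₗ[R] (s → R) := LinearMap.pi fun i => LinearMap.toSpanSingleton R R (i : R)
  have hφ : ∀ u i, φ u i = u * (i : R) := fun u i => rfl
  let K := LinearMap.ker φ
  have hK : ∀ u ∈ K, ∀ t ∈ Submodule.span Rᵐᵒᵖ (s : Set R), u * t = 0 := by
    intro u hu t ht
    induction ht using Submodule.span_induction with
    | mem t ht => exact congrFun (LinearMap.mem_ker.1 hu) ⟨t, ht⟩
    | zero => exact mul_zero _
    | add a b _ _ ha hb => rw [mul_add, ha, hb, add_zero]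
    | smul c a _ ha => rw [rsmul_eq, ← mul_assoc, ha, zero_mul]
  let ψ : R →ₗ[R] R := LinearMap.toSpanSingleton R R x
  obtain ⟨g, hg⟩ := h.out (K.liftQ φ le_rfl)
    (LinearMap.ker_eq_bot.1 (Submodule.ker_liftQ_eq_bot _ _ _ le_rfl))
    (K.liftQ ψ (fun u hu => hx u (hK u hu)))
  have h1 : g (φ 1) = ψ 1 := hg (K.mkQ 1)
  have h2 : ψ 1 = x := one_mul x
  have h3 : φ 1 = ∑ i : s, (i : R) • (Pi.single i 1 : s → R) := by
    funext j
    rw [hφ, one_mul, Finset.sum_apply]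
    simp [Pi.single_apply]
  rw [h2, h3, map_sum] at h1
  rw [← h1]
  refine Submodule.sum_mem _ fun i _ => ?_
  rw [map_smul, smul_eq_mul]
  exact rmul_mem _ (Submodule.subset_span i.2) _

theorem inj_pinj {R : Type*} [Ring R] (h : Module.Injective R R) : PInj R := by
  intro a x hx
  have := inj_fg h (Submodule.span Rᵐᵒᵖ {a}) (Submodule.fg_span_singleton a) x (fun u hu =>
    hx u (hu a (Submodule.mem_span_singleton_self a)))
  obtain ⟨s, hs⟩ := Submodule.mem_span_singleton.1 this
  exact ⟨s.unop, hs.symm⟩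

theorem exists_compl {R : Type*} [Ring R] (I A : Ideal R) (h : A ⊓ I = ⊥) :
    ∃ C : Ideal R, A ≤ C ∧ C ⊓ I = ⊥ ∧ ∀ C' : Ideal R, C ≤ C' → C' ⊓ I = ⊥ → C' = C := by
  obtain ⟨C, hAC, hC⟩ := zorn_le_nonempty₀ {C : Ideal R | C ⊓ I = ⊥} (fun c hc hch y hy => by
    refine ⟨sSup c, ?_, fun z hz => le_sSup hz⟩
    rw [Set.mem_ofPred_eq, eq_bot_iff]
    rintro x ⟨hx1, hx2⟩
    obtain ⟨B, hB, hxB⟩ := (Submodule.mem_sSup_of_directed ⟨y, hy⟩ hch.directedOn).1 hx1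
    have : x ∈ B ⊓ I := ⟨hxB, hx2⟩
    rw [hc hB] at this
    exact this) A h
  exact ⟨C, hAC, hC.1, fun C' h1 h2 => le_antisymm (hC.2 h2 h1) h1⟩

theorem inj_cs {R : Type*} [Ring R] (h : Module.Injective R R) : IsLeftCS R := by
  intro I
  obtain ⟨C, -, hC, hCmax⟩ := exists_compl I ⊥ (bot_inf_eq _)
  obtain ⟨K, hIK, hK, hKmax⟩ := exists_compl C I (by rw [inf_comm]; exact hC)
  obtain ⟨g', hg'⟩ := h.out (C.mkQ.comp K.subtype) (by
    rw [← LinearMap.ker_eq_bot, LinearMap.ker_comp, Submodule.ker_mkQ, eq_bot_iff]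
    intro x hx
    have : (x : R) ∈ K ⊓ C := ⟨x.2, hx⟩
    rw [hK] at this
    exact Subtype.ext this) K.subtype
  let g : R →ₗ[R] R := g'.comp C.mkQ
  have gK : ∀ k ∈ K, g k = k := fun k hk => hg' ⟨k, hk⟩
  have gC : ∀ c ∈ C, g c = 0 := fun c hc => by
    show g' (C.mkQ c) = 0
    rw [Submodule.mkQ_apply, (Submodule.Quotient.mk_eq_zero C).2 hc, map_zero]
  -- `K` essential in range
  have hess : ∀ L : Ideal R, L ≤ LinearMap.range g → L ⊓ K = ⊥ → L = ⊥ := by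
    intro L hL hLK
    have h1 : Submodule.comap g L = C := by
      refine hCmax _ (fun c hc => ?_) ?_
      · rw [Submodule.mem_comap, gC c hc]; exact zero_mem _
      · rw [eq_bot_iff]
        rintro x ⟨hx1, hx2⟩
        have : x ∈ L ⊓ K := ⟨by rw [← gK x (hIK hx2)]; exact hx1, hIK hx2⟩
        rw [hLK] at this; exact this
    rw [eq_bot_iff]
    intro y hy
    obtain ⟨x, rfl⟩ := hL hy
    have : x ∈ C := by rw [← h1]; exact hy
    rw [gC x this]; exact zero_mem _
  have hrange : LinearMap.range g = K := by
    refine hKmax _ (fun k hk => ⟨k, gK k hk⟩) ?_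
    refine hess _ inf_le_left ?_
    rw [inf_assoc, inf_comm C, hK, inf_bot_eq]
  refine ⟨K, ⟨LinearMap.ker g, ?_, ?_⟩, hIK, ?_⟩
  · rw [disjoint_iff, eq_bot_iff]
    rintro x ⟨hx1, hx2⟩
    rw [← gK x hx1]; exact hx2
  · rw [codisjoint_iff, eq_top_iff]
    intro x _
    have hx : g x ∈ K := by rw [← hrange]; exact ⟨x, rfl⟩
    rw [show x = g x + (x - g x) by abel]
    exact Submodule.add_mem_sup hx (by rw [LinearMap.mem_ker, map_sub, gK _ hx, sub_self])
  · intro L hLK hLI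
    -- L ⊔ C meets I trivially
    have h1 : L ⊔ C = C := by
      refine hCmax _ le_sup_right ?_
      rw [eq_bot_iff]
      rintro x ⟨hx1, hx2⟩
      obtain ⟨l, hl, c, hc, rfl⟩ := Submodule.mem_sup.1 hx1
      have hcK : c ∈ K ⊓ C := ⟨by
        have := K.sub_mem (hIK hx2) (hLK hl)
        rwa [add_sub_cancel_left] at this, hc⟩
      rw [hK] at hcK
      have hc0 : c = 0 := hcK
      subst hc0
      rw [add_zero] at hx2 ⊢
      rw [← hLI]; exact ⟨hl, hx2⟩
    rw [eq_bot_iff, ← hK]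
    exact le_inf hLK (h1 ▸ le_sup_left)

theorem jac_zel {R : Type*} [Ring R] (hcs : IsLeftCS R) (hp : PInj R) (x : R)
    (hx : x ∈ Ring.jacobson R) : ZEl x := by
  obtain ⟨s, hs⟩ := cs_vnr hcs hp x
  obtain ⟨v, hv1, hv2⟩ := jac_right hx (-s)
  intro y hy
  have hyv : y * v ≠ 0 := fun h => hy (by
    rw [← mul_one y, ← hv2, ← mul_assoc, h, zero_mul])
  obtain ⟨u, hu1, hu2⟩ := hs (y * v) hyv
  refine ⟨u, fun h => hu1 (by rw [← mul_assoc, h, zero_mul]), ?_⟩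
  have : v * (x - x * s * x) = x := by
    rw [show x - x * s * x = (1 + x * -s) * x by rw [add_mul, one_mul, mul_neg, neg_mul]; abel,
      ← mul_assoc, hv2, one_mul]
  rw [← this]
  rw [← hu2]
  simp only [mul_assoc]

theorem zel_nilp {R : Type*} [Ring R] [IsNoetherianRing R]
    (hz : ∀ x ∈ Ring.jacobson R, ZEl x) : IsNilpotent (Ring.jacobson R) := by
  set J := Ring.jacobson R with hJ
  have hanti : ∀ n, J ^ (n + 2) ≤ J ^ (n + 1) := by
    intro n
    rw [show n + 2 = (n + 1) + 1 from rfl, Submodule.pow_succ' _ (Nat.succ_ne_zero n)]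
    exact Submodule.mul_le.2 fun m _ k hk => Ideal.mul_mem_left _ m hk
  obtain ⟨n, hn⟩ := monotone_stabilizes_iff_noetherian.2 (inferInstanceAs (IsNoetherian R R))
    ⟨fun n => lAnnI R (J ^ (n + 1) : Ideal R), monotone_nat_of_le_succ
      fun n u hu y hy => hu y (hanti n hy)⟩
  refine ⟨n + 1, ?_⟩
  by_contra hne
  obtain ⟨x, hx, hx0⟩ := Submodule.exists_mem_ne_zero_of_ne_bot hne
  obtain ⟨M, ⟨a, ⟨w, hw, haw⟩, rfl⟩, hmax⟩ :=
    (set_has_maximal_iff_noetherian (R := R) (M := R)).2 inferInstance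
    {M : Ideal R | ∃ a : R, (∃ w ∈ J ^ (n + 1), a * w ≠ 0) ∧ M = lAnnI R {a}}
    ⟨_, 1, ⟨x, hx, by rwa [one_mul]⟩, rfl⟩
  have ha0 : a ≠ 0 := fun h => haw (by rw [h, zero_mul])
  have key : ∀ b ∈ J, ∀ w ∈ J ^ (n + 1), a * b * w = 0 := by
    intro b hb w hw
    by_contra hcon
    refine hmax (lAnnI R {a * b}) ⟨a * b, ⟨w, hw, hcon⟩, rfl⟩ ?_
    obtain ⟨u, hu1, hu2⟩ := hz b hb a ha0
    refine lt_of_le_of_ne ?_ ?_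
    · rintro z hz x rfl
      rw [← mul_assoc, hz a rfl, zero_mul]
    · intro h
      have : u ∈ lAnnI R {a * b} := by rintro x rfl; rw [← mul_assoc]; exact hu2
      rw [← h] at this
      exact hu1 (this a rfl)
  have h2 : a ∈ lAnnI R (J ^ (n + 2) : Ideal R) := by
    intro y hy
    have hy' : y ∈ J * J ^ (n + 1) := by
      rw [← Submodule.pow_succ' _ (Nat.succ_ne_zero n)]; exact hy
    clear hy
    induction hy' using Submodule.mul_induction_on' with
    | mem_mul_mem m hm k hk => rw [← mul_assoc]; exact key m hm k hk
    | add x _ y _ ihx ihy => rw [mul_add, ihx, ihy, add_zero]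
  have h3 : lAnnI R (J ^ (n + 1) : Ideal R) = lAnnI R (J ^ (n + 2) : Ideal R) :=
    hn (n + 1) (Nat.le_succ n)
  rw [← h3] at h2
  exact haw (h2 w hw)

theorem qf_johns {R : Type*} [Ring R] (h : IsQuasiFrobenius R) : IsRightJohns R ∧ IsLeftCS R := by
  obtain ⟨hnoe, hinj⟩ := h
  have hcs := inj_cs hinj
  have hp := inj_pinj hinj
  have hart : IsArtinianRing R := artin_of (fun a => by
    obtain ⟨x, hx⟩ := cs_vnr hcs hp a
    exact ⟨x, zel_jac hp _ hx⟩) (zel_nilp (jac_zel hcs hp))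
  have hfg : ∀ T : RIdeal R, T.FG := by
    intro T
    obtain ⟨M, ⟨T', hT', hle, rfl⟩, hmin⟩ := IsArtinian.set_has_minimal (R := R) (M := R)
      {M : Ideal R | ∃ T' : RIdeal R, T'.FG ∧ T' ≤ T ∧ M = lAnnI R (T' : Set R)}
      ⟨_, ⊥, Submodule.fg_bot, bot_le, rfl⟩
    have : T' = T := by
      refine le_antisymm hle fun x hx => inj_fg hinj T' hT' x fun u hu => ?_
      have hle2 : lAnnI R ((T' ⊔ Submodule.span Rᵐᵒᵖ {x} : RIdeal R) : Set R) ≤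
          lAnnI R (T' : Set R) := fun z hz t ht => hz t (Submodule.mem_sup_left ht)
      have heq := eq_of_le_of_not_lt hle2 (hmin _ ⟨T' ⊔ Submodule.span Rᵐᵒᵖ {x},
        hT'.sup (Submodule.fg_span_singleton x), sup_le hle (by
          rwa [Submodule.span_le, Set.singleton_subset_iff]), rfl⟩)
      have hu' : u ∈ lAnnI R (T' : Set R) := hu
      rw [← heq] at hu'
      exact hu' x (Submodule.mem_sup_right (Submodule.mem_span_singleton_self x))
    exact this ▸ hT'
  have hnr : IsNoetherian Rᵐᵒᵖ R := ⟨hfg⟩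
  refine ⟨⟨(toOp R).isNoetherian_iff.1 hnr, fun T => ⟨lAnn R (T : Set R), ?_⟩⟩, hcs⟩
  ext x
  constructor
  · intro hx u hu
    exact hu x hx
  · intro hx
    exact inj_fg hinj T (hfg T) x fun u hu => hx u hu

end QF

/-- `R` is QF iff `R` is right Johns and left CS. -/
theorem stmt11 (R : Type*) [Ring R] :
    IsQuasiFrobenius R ↔ (IsRightJohns R ∧ IsLeftCS R) :=
  ⟨qf_johns, fun h => (good_of h.1 h.2).qf⟩
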